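/- Let w : ℝ³ → ℝ be continuous with w(x) > 0 for all x, let c > 0, and let E : ℝ³ → ℝ³ be a twice continuously differentiable, compactly supported vector field satisfying (c²/w(x)) curl(curl E)(x) + E(x) = 0 for every x ∈ ℝ³, where curl E = (∂₂E₃ − ∂₃E₂, ∂₃E₁ − ∂₁E₃, ∂₁E₂ − ∂₂E₁). Then E = 0 identically. (The operator 𝒟[E] = (c²/ω_p²)∇×(∇×E) + E of the neutral Vlasov model has no nonzero null eigenvector, so the electric field functional 𝓔 = 𝒟⁻¹[…] is well defined.) -/

import Mathlib

/-!
Pairing the equation with `curl (curl E)` gives `E · curl (curl E) = -(c²/w) |curl (curl E)|² ≤ 0`,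
so `div (E × curl E) = |curl E|² - E · curl (curl E)` is a sum of two nonnegative terms. Being the
divergence of a compactly supported field, it has zero integral, hence vanishes identically. Thus
`curl E = 0`, and the equation reduces to `E = 0`.
-/

/-- The partial derivative `∂ᵢ f` of a scalar function on `ℝ³`. -/
noncomputable def pderiv3 (f : (Fin 3 → ℝ) → ℝ) (i : Fin 3) (x : Fin 3 → ℝ) : ℝ :=
  fderiv ℝ f x (Pi.single i 1)

/-- The curl of a vector field on `ℝ³`:
`curl E = (∂₂E₃ − ∂₃E₂, ∂₃E₁ − ∂₁E₃, ∂₁E₂ − ∂₂E₁)`. -/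
noncomputable def curl3 (F : (Fin 3 → ℝ) → (Fin 3 → ℝ)) (x : Fin 3 → ℝ) :
    Fin 3 → ℝ :=
  ![pderiv3 (fun y => F y 2) 1 x - pderiv3 (fun y => F y 1) 2 x,
    pderiv3 (fun y => F y 0) 2 x - pderiv3 (fun y => F y 2) 0 x,
    pderiv3 (fun y => F y 1) 0 x - pderiv3 (fun y => F y 0) 1 x]

open MeasureTheory Matrix

section Divergence

variable {V W : Type*} [NormedAddCommGroup V] [NormedSpace ℝ V] [FiniteDimensional ℝ V]
  [MeasurableSpace V] [BorelSpace V] [NormedAddCommGroup W] [NormedSpace ℝ W]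

theorem integral_fderiv_apply_eq_zero (μ : Measure V) [μ.IsAddHaarMeasure] {f : V → W} {v : V}
    (hf : Differentiable ℝ f) (hfi : Integrable f μ)
    (hfi' : Integrable (fun x ↦ fderiv ℝ f x v) μ) :
    ∫ x, fderiv ℝ f x v ∂μ = 0 := by
  simpa using integral_smul_fderiv_eq_neg_fderiv_smul_of_integrable (𝕜 := ℝ) (f := fun _ ↦ 1)
    (by simp) (by simpa using hfi') (by simpa using hfi) (fun x _ ↦ differentiableAt_const 1)
    (fun x _ ↦ hf x)

variable {ι : Type*} [Fintype ι] [DecidableEq ι] {F : (ι → ℝ) → ι → ℝ}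

/-- The divergence `∑ᵢ ∂ᵢFᵢ` of a vector field on `ℝ^ι`, encoded as the trace of the Fréchet
derivative in the standard basis. It turns the energy identity for `curl` into the vanishing of an
integral. -/
noncomputable def divergence (F : (ι → ℝ) → ι → ℝ) (x : ι → ℝ) : ℝ :=
  ∑ i, fderiv ℝ F x (Pi.single i 1) i

theorem continuous_divergence (hF : ContDiff ℝ 1 F) : Continuous (divergence F) :=
  continuous_finsetSum _ fun i _ ↦ (continuous_apply i).comp <|
    (hF.continuous_fderiv one_ne_zero).clm_apply continuous_const

theorem hasCompactSupport_divergence (hF : HasCompactSupport F) :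
    HasCompactSupport (divergence F) :=
  (hF.fderiv ℝ).mono fun x hx hx' ↦ hx (by simp [divergence, hx'])

theorem integral_divergence_eq_zero (hF : ContDiff ℝ 1 F) (hFc : HasCompactSupport F) :
    ∫ x, divergence F x = 0 := by
  have hF' (i : ι) : Integrable (fun x ↦ fderiv ℝ F x (Pi.single i 1)) :=
    (hF.continuous_fderiv one_ne_zero |>.clm_apply continuous_const).integrable_of_hasCompactSupport
      (hFc.fderiv_apply ℝ _)
  have hFi : Integrable F := hF.continuous.integrable_of_hasCompactSupport hFc
  unfold divergence
  rw [integral_finsetSum _ fun i _ ↦ (hF' i).eval i]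
  refine Finset.sum_eq_zero fun i _ ↦ ?_
  rw [← eval_integral fun j ↦ (hF' i).eval j,
    integral_fderiv_apply_eq_zero volume (hF.differentiable one_ne_zero) hFi (hF' i), Pi.zero_apply]

theorem divergence_eq_zero_of_nonneg (hF : ContDiff ℝ 1 F) (hFc : HasCompactSupport F)
    (hdiv : ∀ x, 0 ≤ divergence F x) : divergence F = 0 := by
  by_contra! hne
  obtain ⟨x, hx⟩ := Function.ne_iff.mp hne
  exact ((continuous_divergence hF).integral_pos_of_hasCompactSupport_nonneg_nonzero
    (hasCompactSupport_divergence hFc) hdiv hx).ne' (integral_divergence_eq_zero hF hFc)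

end Divergence

section CrossProduct

theorem contDiff_crossProduct {V : Type*} [NormedAddCommGroup V] [NormedSpace ℝ V]
    {n : WithTop ℕ∞} {F G : V → Fin 3 → ℝ} (hF : ContDiff ℝ n F) (hG : ContDiff ℝ n G) :
    ContDiff ℝ n (fun x ↦ F x ⨯₃ G x) :=
  (crossProduct (R := ℝ)).toContinuousBilinearMap.isBoundedBilinearMap.contDiff.comp₂ hF hG

theorem hasCompactSupport_crossProduct_left {X R : Type*} [TopologicalSpace X] [CommRing R]
    {F G : X → Fin 3 → R} (hF : HasCompactSupport F) :
    HasCompactSupport (fun x ↦ F x ⨯₃ G x) :=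
  hF.mono fun x hx hFx ↦ hx (by simp [hFx])

end CrossProduct

section Curl

variable {F G : (Fin 3 → ℝ) → Fin 3 → ℝ} {x : Fin 3 → ℝ}

theorem contDiff_pderiv3 {n : WithTop ℕ∞} {f : (Fin 3 → ℝ) → ℝ} (hf : ContDiff ℝ (n + 1) f)
    (i : Fin 3) : ContDiff ℝ n (pderiv3 f i) :=
  (hf.fderiv_right le_rfl).clm_apply contDiff_const

theorem contDiff_curl3 {n : WithTop ℕ∞} (hF : ContDiff ℝ (n + 1) F) : ContDiff ℝ n (curl3 F) := by
  have h (i j : Fin 3) : ContDiff ℝ n (pderiv3 (fun y ↦ F y j) i) :=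
    contDiff_pderiv3 (contDiff_pi.mp hF j) i
  refine contDiff_pi.mpr fun k ↦ ?_
  fin_cases k
  exacts [(h 1 2).sub (h 2 1), (h 2 0).sub (h 0 2), (h 0 1).sub (h 1 0)]

theorem curl3_zero : curl3 0 = 0 := by
  ext x k
  fin_cases k <;> simp [curl3, pderiv3]

theorem pderiv3_component_eq_fderiv_apply (hF : DifferentiableAt ℝ F x) (i j : Fin 3) :
    pderiv3 (fun y ↦ F y j) i x = fderiv ℝ F x (Pi.single i 1) j := by
  rw [pderiv3, fderiv_apply hF j]
  rfl

theorem divergence_crossProduct (hF : DifferentiableAt ℝ F x) (hG : DifferentiableAt ℝ G x) :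
    divergence (fun y ↦ F y ⨯₃ G y) x = G x ⬝ᵥ curl3 F x - F x ⬝ᵥ curl3 G x := by
  have hfderiv (v : Fin 3 → ℝ) : fderiv ℝ (fun y ↦ F y ⨯₃ G y) x v =
      F x ⨯₃ fderiv ℝ G x v + fderiv ℝ F x v ⨯₃ G x :=
    congrArg (· v) ((crossProduct (R := ℝ)).toContinuousBilinearMap.fderiv_of_bilinear hF hG)
  simp only [divergence, hfderiv]
  simp only [curl3, pderiv3_component_eq_fderiv_apply hF, pderiv3_component_eq_fderiv_apply hG,
    cross_apply, vec3_dotProduct, Fin.sum_univ_three, Pi.add_apply, cons_val]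
  ring

theorem curl3_eq_zero_of_dotProduct_curl3_curl3_nonpos (hF : ContDiff ℝ 2 F)
    (hFc : HasCompactSupport F) (h : ∀ x, F x ⬝ᵥ curl3 (curl3 F) x ≤ 0) : curl3 F = 0 := by
  have hF₁ : ContDiff ℝ 1 F := hF.of_le one_le_two
  have hcurl : ContDiff ℝ 1 (curl3 F) := contDiff_curl3 (by rwa [one_add_one_eq_two])
  have hdiv (x : Fin 3 → ℝ) : divergence (fun y ↦ F y ⨯₃ curl3 F y) x =
      curl3 F x ⬝ᵥ curl3 F x - F x ⬝ᵥ curl3 (curl3 F) x :=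
    divergence_crossProduct (hF₁.differentiable one_ne_zero x) (hcurl.differentiable one_ne_zero x)
  have hsq (x : Fin 3 → ℝ) : 0 ≤ curl3 F x ⬝ᵥ curl3 F x := dotProduct_self_star_nonneg (curl3 F x)
  have hdiv_zero : divergence (fun y ↦ F y ⨯₃ curl3 F y) = 0 :=
    divergence_eq_zero_of_nonneg (contDiff_crossProduct hF₁ hcurl)
      (hasCompactSupport_crossProduct_left hFc) fun x ↦ by linarith [hdiv x, hsq x, h x]
  funext x
  refine dotProduct_self_eq_zero.mp (le_antisymm ?_ (hsq x))
  have henergy : curl3 F x ⬝ᵥ curl3 F x - F x ⬝ᵥ curl3 (curl3 F) x = 0 := by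
    rw [← hdiv, hdiv_zero, Pi.zero_apply]
  linarith [h x]

end Curl

theorem dotProduct_nonpos_of_smul_add_eq_zero {ι R : Type*} [Fintype ι] [Ring R] [LinearOrder R]
    [IsStrictOrderedRing R] {a : R} {u v : ι → R} (ha : 0 ≤ a) (h : a • v + u = 0) :
    u ⬝ᵥ v ≤ 0 := by
  rw [eq_neg_of_add_eq_zero_right h, neg_dotProduct, smul_dotProduct, neg_nonpos]
  exact mul_nonneg ha (Finset.sum_nonneg fun i _ ↦ mul_self_nonneg (v i))

theorem neutral_vlasov_operator_no_null_eigenvector_general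
    (a : (Fin 3 → ℝ) → ℝ) (ha : ∀ x, 0 ≤ a x)
    (E : (Fin 3 → ℝ) → (Fin 3 → ℝ))
    (hE : ContDiff ℝ 2 E) (hsupp : HasCompactSupport E)
    (heq : ∀ x : Fin 3 → ℝ, a x • curl3 (curl3 E) x + E x = 0) :
    ∀ x, E x = 0 := by
  have hcurl : curl3 E = 0 := curl3_eq_zero_of_dotProduct_curl3_curl3_nonpos hE hsupp fun x ↦
    dotProduct_nonpos_of_smul_add_eq_zero (ha x) (heq x)
  intro x
  simpa [hcurl, curl3_zero] using heq x

/-- **The operator `𝒟` of the neutral Vlasov model has no nonzero null eigenvector.**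
Let `w : ℝ³ → ℝ` be continuous and positive, `c > 0`, and let `E` be a `C²`
compactly supported vector field with `(c²/w) curl(curl E) + E = 0` everywhere.
Then `E = 0`. -/
theorem neutral_vlasov_operator_no_null_eigenvector
    (w : (Fin 3 → ℝ) → ℝ) (hw_cont : Continuous w) (hw_pos : ∀ x, 0 < w x)
    (c : ℝ) (hc : 0 < c)
    (E : (Fin 3 → ℝ) → (Fin 3 → ℝ))
    (hE : ContDiff ℝ 2 E) (hsupp : HasCompactSupport E)
    (heq : ∀ x : Fin 3 → ℝ, (c ^ 2 / w x) • curl3 (curl3 E) x + E x = 0) :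
    ∀ x, E x = 0 :=
  neutral_vlasov_operator_no_null_eigenvector_general (fun x ↦ c ^ 2 / w x)
    (fun x ↦ div_nonneg (sq_nonneg c) (hw_pos x).le) E hE hsupp heq
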